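/- For all n ≥ k ≥ 1, the number of noncrossing partitions of [n] with exactly n−k+1 blocks equals the number of parallelogram polyominoes of size (n−k+1)×k; that is, |NC(n,k)| = |PP(n−k+1,k)|. -/

import Mathlib

namespace QtN

/-! ### Lattice paths and parallelogram polyominoes -/

/-- A step of a lattice path: east or north. -/
inductive Step : Type
  | E : Step
  | N : Step
  deriving DecidableEq, Repr

/-- Number of east steps of a path. -/
def countE (w : List Step) : ℕ := w.count Step.E

/-- Number of north steps of a path. -/
def countN (w : List Step) : ℕ := w.count Step.N

/-- Endpoint of a path started at the origin. -/
def pathPos (w : List Step) : ℕ × ℕ := (countE w, countN w)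

/-- The set of lattice points visited by a path started at the origin. -/
def pathPts (w : List Step) : Finset (ℕ × ℕ) :=
  ((List.range (w.length + 1)).map (fun i => pathPos (w.take i))).toFinset

/-- `colHeightsAux w h`: for each east step of `w` (in order), the number of north
steps preceding it, starting with `h` north steps already performed. -/
def colHeightsAux : List Step → ℕ → List ℕ
  | [], _ => []
  | Step.E :: r, h => h :: colHeightsAux r h
  | Step.N :: r, h => colHeightsAux r (h + 1)

/-- Height at which the path `w` crosses the vertical strip `i ≤ x ≤ i + 1`. -/
def colHeight (w : List Step) (i : ℕ) : ℕ := (colHeightsAux w 0).getD i 0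

/-- A parallelogram polyomino of size `m × n`: a pair of monotone lattice paths from
`(0,0)` to `(m,n)` (east/north steps), the upper path staying weakly above the lower
path, and the two paths meeting only at `(0,0)` and `(m,n)`. -/
structure Polyomino (m n : ℕ) : Type where
  lower : List Step
  upper : List Step
  lowerE : countE lower = m
  lowerN : countN lower = n
  upperE : countE upper = m
  upperN : countN upper = n
  above : ∀ i < m, colHeight lower i ≤ colHeight upper i
  meet : pathPts upper ∩ pathPts lower = {(0, 0), (m, n)}

/-- The area statistic: number of unit squares between the two paths,
minus `(m + n - 1)`. -/
def area {m n : ℕ} (P : Polyomino m n) : ℕ :=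
  (∑ i ∈ Finset.range m, (colHeight P.upper i - colHeight P.lower i)) - (m + n - 1)

/-- Where an eastward run at height `y`, starting at `x`, first hits the lower path. -/
def eastTarget (hL : ℕ → ℕ) (m x y : ℕ) : ℕ :=
  ((List.range m).filter (fun i => decide (x ≤ i ∧ y ≤ hL i))).headD m

/-- Total bounce contribution: from state `(x, y)` just after the `j`-th east-to-north
turn (counting the turns made so far), alternately go north until hitting the upper
path and east until hitting the lower path, each step contributing the number of
east-to-north turns preceding it. -/
def bounceAux (hU hL : ℕ → ℕ) (m n : ℕ) : ℕ → ℕ → ℕ → ℕ → ℕ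
  | 0, _, _, _ => 0
  | fuel + 1, x, y, j =>
    if x = m ∧ y = n then 0
    else
      let y' := hU (x - 1)
      let x' := if y' = n then m else eastTarget hL m x y'
      (j + 1) * ((y' - y) + (x' - x)) + bounceAux hU hL m n fuel x' y' (j + 1)

/-- The bounce statistic of a parallelogram polyomino: the bounce path starts with a
single east step (contributing `0`) and then alternates north runs (to the ceiling)
and east runs (to the floor); each step contributes the number of east-to-north turns
preceding it; finally `(m + n - 1)` is subtracted. -/
def bounce {m n : ℕ} (P : Polyomino m n) : ℕ :=
  bounceAux (colHeight P.upper) (colHeight P.lower) m n (m + n + 2) 1 0 0 - (m + n - 1)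

/-! ### Set partitions and noncrossing partitions -/

/-- Maximum of a finite set of naturals (`0` for the empty set). -/
def fmax (β : Finset ℕ) : ℕ := β.sup id

/-- Minimum of a finite set of naturals (`0` for the empty set). -/
def fmin (β : Finset ℕ) : ℕ := if h : β.Nonempty then β.min' h else 0

/-- A set partition of `{1, …, n}`, given by its finite set of blocks. -/
structure SetPartition (n : ℕ) : Type where
  blocks : Finset (Finset ℕ)
  not_empty_mem : ∅ ∉ blocks
  cover : ∀ i : ℕ, i ∈ Finset.Icc 1 n ↔ ∃ β ∈ blocks, i ∈ β
  disjoint : ∀ β ∈ blocks, ∀ γ ∈ blocks, β ≠ γ → Disjoint β γ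

/-- A family of blocks is noncrossing if there are no `a < b < c < d` with
`a, c` in one block and `b, d` in a different block. -/
def IsNoncrossing (bs : Finset (Finset ℕ)) : Prop :=
  ∀ a b c d : ℕ, a < b → b < c → c < d →
    ∀ β ∈ bs, ∀ γ ∈ bs, a ∈ β → c ∈ β → b ∈ γ → d ∈ γ → β = γ

/-- `NC n k`: noncrossing partitions of `{1, …, n}` with exactly `n - k + 1` blocks. -/
abbrev NC (n k : ℕ) : Type :=
  {P : SetPartition n // IsNoncrossing P.blocks ∧ P.blocks.card = n - k + 1}

/-- The skip statistic: `∑_{β} (max β - min β - |β| + 1)`. -/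
def skip (bs : Finset (Finset ℕ)) : ℕ :=
  ∑ β ∈ bs, ((fmax β + 1 - fmin β) - β.card)

/-- The non-singleton blocks of a partition. -/
def nsBlocks (bs : Finset (Finset ℕ)) : Finset (Finset ℕ) :=
  bs.filter (fun β => 2 ≤ β.card)

/-- The block of `bs` containing `x` (junk if there is not exactly one). -/
def blockContaining (bs : Finset (Finset ℕ)) (x : ℕ) : Finset ℕ :=
  (bs.filter (fun β => x ∈ β)).sup id

/-- For a noncrossing partition in `NC n 3`, the quadruple `(a, b, c, d)` describing its
non-singleton blocks: for two pair blocks `{a,b}` and `{c,d}` (with `a` the global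
minimum) this is `(a, b, c, d)`; for a single triple block `{a, b, c}` (`a < b < c`)
this is `(a, b, b, c)`. -/
def blockQuad (bs : Finset (Finset ℕ)) : ℕ × ℕ × ℕ × ℕ :=
  let A := blockContaining (nsBlocks bs) (fmin ((nsBlocks bs).sup id))
  if (nsBlocks bs).card = 1 then
    let l := A.sort (· ≤ ·)
    (l.getD 0 0, l.getD 1 0, l.getD 1 0, l.getD 2 0)
  else
    let B := ((nsBlocks bs).erase A).sup id
    (fmin A, fmax A, fmin B, fmax B)

/-- The leap statistic on `NC n 3`: `leap(ab|cd) = c - 2 + max(0, c - b)`,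
and `leap({a,b,c}) = b - 2` (the case `b = c`). -/
def leap (bs : Finset (Finset ℕ)) : ℕ :=
  let (_, b, c, _) := blockQuad bs
  (c - 2) + (c - b)

/-- The skew statistic on `NC n 3`: `skew(ab|cd) = c - 2 + a` if `b < c`, else `c - 2`;
`skew({a,b,c}) = b - 2` (the case `b = c`). -/
def skew (bs : Finset (Finset ℕ)) : ℕ :=
  let (a, b, c, _) := blockQuad bs
  if b < c then c - 2 + a else c - 2

/-- The mag statistic on `NC n 3`: `mag(ab|cd) = a + max(b, c) - 2 - ⌈(b - a)/2⌉`,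
and `mag({a,b,c}) = a + b - 2 - ⌈(b - a)/2⌉` (the case `b = c`). -/
def mag (bs : Finset (Finset ℕ)) : ℕ :=
  let (a, b, c, _) := blockQuad bs
  a + max b c - 2 - (b - a + 1) / 2

/-- The area statistic on noncrossing partitions:
`area(π) = ∑_{β, β' ∈ π} #{ i ∈ β' : i < max β < max β' }` (ordered pairs of blocks). -/
def ncArea (bs : Finset (Finset ℕ)) : ℕ :=
  ∑ β ∈ bs, ∑ γ ∈ bs, (γ.filter (fun i => i < fmax β ∧ fmax β < fmax γ)).card

/-- The elements of the non-singleton blocks, listed in increasing order, with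
the middle element of a size-3 block listed twice. -/
def nsList (bs : Finset (Finset ℕ)) : List ℕ :=
  let l := ((nsBlocks bs).sup id).sort (· ≤ ·)
  if l.length = 3 then [l.getD 0 0, l.getD 1 0, l.getD 1 0, l.getD 2 0] else l

/-- The multiset of block sizes of a partition. -/
def blockSizes (bs : Finset (Finset ℕ)) : Multiset ℕ := bs.val.map Finset.card

/-- The image of a partition of `{1, …, n}` under the flip `i ↦ n + 1 - i`. -/
def flipBlocks (n : ℕ) (bs : Finset (Finset ℕ)) : Finset (Finset ℕ) :=
  bs.image (fun β => β.image (fun i => n + 1 - i))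

/-! ### The mingarc statistic -/

/-- The gaps `ν_r = m_{r+1} - m_r - 1` between consecutive block minima
`m_1 < ⋯ < m_h` (with `m_{h+1} = n + 1`). -/
def nuList (n : ℕ) (bs : Finset (Finset ℕ)) : List ℕ :=
  let ms := ((bs.image fmin).sort (· ≤ ·)) ++ [n + 1]
  (List.range (bs.image fmin).card).map (fun r => ms.getD (r + 1) 0 - ms.getD r 0 - 1)

/-- Concatenation of `replicate ν c` over a list of pairs `(c, ν)`. -/
def repeatEach : List (ℕ × ℕ) → List ℕ
  | [] => []
  | p :: r => List.replicate p.2 p.1 ++ repeatEach r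

/-- The right endpoints `y_1 ≤ ⋯ ≤ y_{k-1}`: each block maximum `c_r` repeated
`ν_r` times, in increasing order. -/
def ysList (n : ℕ) (bs : Finset (Finset ℕ)) : List ℕ :=
  repeatEach (List.zip ((bs.image fmax).sort (· ≤ ·)) (nuList n bs))

/-- The left endpoints `x_1 < ⋯ < x_{k-1}`: the elements of `{1, …, n}` that are not
block maxima, in increasing order. -/
def xsList (n : ℕ) (bs : Finset (Finset ℕ)) : List ℕ :=
  ((Finset.Icc 1 n).filter (fun i => i ∉ bs.image fmax)).sort (· ≤ ·)

/-- Greedy left-to-right selection of arcs: keep the first arc, and thereafter keep the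
earliest arc whose left endpoint exceeds the right endpoint of the last kept arc. -/
def greedyArcs : List (ℕ × ℕ) → Option ℕ → List (ℕ × ℕ)
  | [], _ => []
  | a :: rest, none => a :: greedyArcs rest (some a.2)
  | a :: rest, some r =>
      if r < a.1 then a :: greedyArcs rest (some a.2) else greedyArcs rest (some r)

/-- The mingarc statistic: the sum of `n - y_i` over the greedily selected
candidate arcs `[x_i, y_i]`. -/
def mingarc (n : ℕ) (bs : Finset (Finset ℕ)) : ℕ :=
  ((greedyArcs (List.zip (xsList n bs) (ysList n bs)) none).map (fun p => n - p.2)).sum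

/-! ### The map η from polyominoes to noncrossing partitions -/

/-- Largest column index `i < m` with `colHeight lower i ≤ j`: the rightmost cell
adjacent to the floor in row `j`. -/
def eFloor {m k : ℕ} (P : Polyomino m k) (j : ℕ) : ℕ :=
  (((List.range m).filter (fun i => decide (colHeight P.lower i ≤ j))).getLastD 0)

/-- Smallest column index `i` with `colHeight upper i ≥ j + 1`: the leftmost cell
adjacent to the ceiling in row `j` (with default `m - 1`). -/
def fCeil {m k : ℕ} (P : Polyomino m k) (j : ℕ) : ℕ :=
  (((List.range m).filter (fun i => decide (j + 1 ≤ colHeight P.upper i))).headD (m - 1))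

/-- The number of cells adjacent to the ceiling in row `j`. -/
def rowCount {m k : ℕ} (P : Polyomino m k) (j : ℕ) : ℕ :=
  fCeil P (j + 1) - fCeil P j + 1

/-- Pick, `cnt` times, the largest label in `{1, …, L}` not used yet. -/
def pickRow : ℕ → ℕ → Finset ℕ → Finset ℕ
  | 0, _, _ => ∅
  | cnt + 1, L, used =>
      let x := fmax ((Finset.Icc 1 L) \ used)
      insert x (pickRow cnt L (insert x used))

/-- The blocks of `η(P)`: label the cells adjacent to the floor `1, …, n` going bottom
to top, left to right (the label of the floor cell in column `i`, row `j` is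
`i + j + 1`, and the labels present in rows `≤ j` are exactly `1, …, eFloor P j + j + 1`);
then going bottom to top, left to right over the cells adjacent to the ceiling, assign
to each the largest unused indexing label occurring in the same row or below; the
blocks are the label sets of the ceiling rows. -/
def etaBlocks {m k : ℕ} (P : Polyomino m k) : Finset (Finset ℕ) :=
  (((List.range k).foldl
      (fun st j =>
        let B := pickRow (rowCount P j) (eFloor P j + j + 1) st.1
        (st.1 ∪ B, B :: st.2))
      ((∅ : Finset ℕ), ([] : List (Finset ℕ)))).2).toFinset



def CF (S : Finset ℕ) (f : ℕ → ℕ) : Prop :=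
  (∀ x ∈ S, f x ∈ S ∧ f x ≤ x ∧ f (f x) = f x) ∧
  (∀ a ∈ S, ∀ b ∈ S, ∀ c ∈ S, ∀ d ∈ S, a < b → b < c → c < d → f a = f c → f b = f d → f a = f b)

open Classical in
noncomputable def nmax (S : Finset ℕ) (f : ℕ → ℕ) : Finset ℕ :=
  S.filter (fun x => ∃ y ∈ S, x < y ∧ f y = f x)

def nmin (S : Finset ℕ) (f : ℕ → ℕ) : Finset ℕ := S.filter (fun x => f x ≠ x)

def Bal (S A B : Finset ℕ) : Prop :=
  A ⊆ S ∧ B ⊆ S ∧ A.card = B.card ∧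
    ∀ s ∈ S, (B.filter (· ≤ s)).card ≤ (A.filter (· < s)).card

lemma mem_nmax {S : Finset ℕ} {f : ℕ → ℕ} {x : ℕ} :
    x ∈ nmax S f ↔ x ∈ S ∧ ∃ y ∈ S, x < y ∧ f y = f x := by simp [nmax]

lemma mem_nmin {S : Finset ℕ} {f : ℕ → ℕ} {x : ℕ} :
    x ∈ nmin S f ↔ x ∈ S ∧ f x ≠ x := by simp [nmin]

lemma cf_step {S : Finset ℕ} {f : ℕ → ℕ} (h : CF S f) {b : ℕ} (hb : b ∈ nmin S f)
    (hmin : ∀ x ∈ nmin S f, b ≤ x) :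
    ∃ a ∈ nmax S f, a < b ∧ (∀ x ∈ nmax S f, x < b → x ≤ a) ∧ f b = a ∧ f a = a ∧
      CF (S.erase b) f ∧ nmin (S.erase b) f = (nmin S f).erase b ∧
      nmax (S.erase b) f = (nmax S f).erase (if b ∈ nmax S f then b else a) := by
  obtain ⟨h1, h2⟩ := h
  rw [mem_nmin] at hb
  obtain ⟨hbS, hfb⟩ := hb
  obtain ⟨haS, hle, hidem⟩ := h1 b hbS
  have hlt : f b < b := lt_of_le_of_ne hle hfb
  have hsmall : ∀ x ∈ S, x < b → f x = x := by
    intro x hx hxb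
    by_contra hne
    exact absurd (hmin x (mem_nmin.2 ⟨hx, hne⟩)) (by omega)
  have hfix : ∀ x ∈ S, f x ≠ b := by
    intro x hx hxb
    have := (h1 x hx).2.2
    rw [hxb] at this
    exact hfb this
  refine ⟨f b, mem_nmax.2 ⟨haS, b, hbS, hlt, hidem.symm⟩, hlt, ?_, rfl, hidem, ?_, ?_, ?_⟩
  · intro x hx hxb
    by_contra hcon
    push Not at hcon
    obtain ⟨hxS, y, hyS, hxy, hyx⟩ := mem_nmax.1 hx
    have hfx := hsmall x hxS hxb
    have hyb : b ≤ y := hmin y (mem_nmin.2 ⟨hyS, by omega⟩)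
    rcases eq_or_lt_of_le hyb with rfl | hyb
    · omega
    · have := h2 (f b) haS x hxS b hbS y hyS hcon hxb hyb hidem hyx.symm
      omega
  · refine ⟨?_, ?_⟩
    · intro x hx
      rw [Finset.mem_erase] at hx
      obtain ⟨p, q, r⟩ := h1 x hx.2
      exact ⟨Finset.mem_erase.2 ⟨hfix x hx.2, p⟩, q, r⟩
    · intro a ha b hb c hc d hd
      exact h2 a (Finset.mem_of_mem_erase ha) b (Finset.mem_of_mem_erase hb) c
        (Finset.mem_of_mem_erase hc) d (Finset.mem_of_mem_erase hd)
  · ext x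
    simp only [mem_nmin, Finset.mem_erase]
    tauto
  · ext x
    rw [Finset.mem_erase, mem_nmax, @mem_nmax S f x]
    split_ifs with hbA
    · obtain ⟨_, z, hz, hbz, hzb⟩ := mem_nmax.1 hbA
      constructor
      · rintro ⟨hx, y, hy, hxy, e⟩
        rw [Finset.mem_erase] at hx hy
        exact ⟨hx.1, hx.2, y, hy.2, hxy, e⟩
      · rintro ⟨hxb, hx, y, hy, hxy, e⟩
        refine ⟨Finset.mem_erase.2 ⟨hxb, hx⟩, ?_⟩
        by_cases hyb : y = b
        · subst hyb
          exact ⟨z, Finset.mem_erase.2 ⟨by omega, hz⟩, by omega, by omega⟩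
        · exact ⟨y, Finset.mem_erase.2 ⟨hyb, hy⟩, hxy, e⟩
    · have hno : ∀ z ∈ S, b < z → f z ≠ f b := fun z hz hbz e =>
        hbA (mem_nmax.2 ⟨hbS, z, hz, hbz, e⟩)
      constructor
      · rintro ⟨hx, y, hy, hxy, e⟩
        rw [Finset.mem_erase] at hx hy
        refine ⟨?_, hx.2, y, hy.2, hxy, e⟩
        rintro rfl
        have := hmin y (mem_nmin.2 ⟨hy.2, by omega⟩)
        exact hno y hy.2 (by omega) (by omega)
      · rintro ⟨hxa, hx, y, hy, hxy, e⟩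
        have hyb : y ≠ b := by
          rintro rfl
          have := hsmall x hx hxy
          omega
        refine ⟨Finset.mem_erase.2 ⟨?_, hx⟩, y, Finset.mem_erase.2 ⟨hyb, hy⟩, hxy, e⟩
        rintro rfl
        exact hno y hy hxy e

lemma exists_min_nmin {B : Finset ℕ} (h : B.Nonempty) : ∃ b ∈ B, ∀ x ∈ B, b ≤ x :=
  ⟨B.min' h, B.min'_mem h, fun x hx => B.min'_le x hx⟩

lemma card_filter_erase {A : Finset ℕ} {c : ℕ} (hc : c ∈ A) (p : ℕ → Prop) [DecidablePred p] :
    (A.filter p).card = ((A.erase c).filter p).card + (if p c then 1 else 0) := by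
  conv_lhs => rw [← Finset.insert_erase hc]
  rw [Finset.filter_insert]
  split_ifs with h
  · rw [Finset.card_insert_of_notMem (by simp)]
  · rfl

lemma cf_bal : ∀ (N : ℕ) (S : Finset ℕ) (f : ℕ → ℕ), (nmin S f).card = N → CF S f →
    Bal S (nmax S f) (nmin S f) := by
  intro N
  induction N with
  | zero =>
    intro S f hN h
    rw [Finset.card_eq_zero] at hN
    have hA : nmax S f = ∅ := by
      rw [Finset.eq_empty_iff_forall_notMem]
      intro x hx
      obtain ⟨hx, y, hy, hxy, e⟩ := mem_nmax.1 hx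
      have hy' : y ∈ nmin S f := mem_nmin.2 ⟨hy, by have := (h.1 x hx).2.1; omega⟩
      simp [hN] at hy'
    rw [hN, hA]
    exact ⟨by simp, by simp, rfl, by simp⟩
  | succ N ih =>
    intro S f hN h
    obtain ⟨b, hb, hmin⟩ := exists_min_nmin (Finset.card_pos.1 (by omega : 0 < (nmin S f).card))
    obtain ⟨a, ha, hab, -, -, -, hcf, hB, hA⟩ := cf_step h hb hmin
    have hih := ih (S.erase b) f (by rw [hB, Finset.card_erase_of_mem hb]; omega) hcf
    rw [hA, hB] at hih
    obtain ⟨-, -, h3, h4⟩ := hih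
    set c := if b ∈ nmax S f then b else a with hc
    have hcA : c ∈ nmax S f := by rw [hc]; split_ifs <;> assumption
    have hcb : c ≤ b := by rw [hc]; split_ifs <;> omega
    refine ⟨Finset.filter_subset _ _, Finset.filter_subset _ _, ?_, ?_⟩
    · rw [Finset.card_erase_of_mem hb, Finset.card_erase_of_mem hcA] at h3
      have := Finset.card_pos.2 ⟨c, hcA⟩
      omega
    · intro s hs
      rcases lt_trichotomy s b with hsb | rfl | hsb
      · rw [Finset.filter_eq_empty_iff.2]
        · simp
        · intro x hx; have := hmin x hx; omega
      · have : (nmin S f).filter (· ≤ s) = {s} := by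
          ext x
          simp only [Finset.mem_filter, Finset.mem_singleton]
          constructor
          · rintro ⟨hx, hxs⟩; have := hmin x hx; omega
          · rintro rfl; exact ⟨hb, le_rfl⟩
        rw [this, Finset.card_singleton, Nat.succ_le_iff, Finset.card_pos]
        exact ⟨a, by simp [ha, hab]⟩
      · rw [card_filter_erase hb, card_filter_erase hcA, if_pos (by omega), if_pos (by omega)]
        exact Nat.succ_le_succ (h4 s (Finset.mem_erase.2 ⟨by omega, hs⟩))

lemma cf_unique : ∀ (N : ℕ) (S : Finset ℕ) (f g : ℕ → ℕ), (nmin S f).card = N → CF S f → CF S g →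
    nmin S f = nmin S g → nmax S f = nmax S g → ∀ x ∈ S, f x = g x := by
  intro N
  induction N with
  | zero =>
    intro S f g hN _ _ hB _ x hx
    rw [Finset.card_eq_zero] at hN
    have h1 : x ∉ nmin S f := by simp [hN]
    have h2 : x ∉ nmin S g := by simp [← hB, hN]
    simp only [mem_nmin, not_and, not_not] at h1 h2
    rw [h1 hx, h2 hx]
  | succ N ih =>
    intro S f g hN hf hg hBB hAA x hx
    obtain ⟨b, hb, hmin⟩ := exists_min_nmin (Finset.card_pos.1 (by omega : 0 < (nmin S f).card))
    obtain ⟨a, ha, hab, hmx, hfb, hfa, hcf, hB, hA⟩ := cf_step hf hb hmin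
    obtain ⟨a', ha', hab', hmx', hfb', hfa', hcf', hB', hA'⟩ :=
      cf_step hg (hBB ▸ hb) (hBB ▸ hmin)
    have : a = a' := le_antisymm (hmx' a (hAA ▸ ha) hab) (hmx a' (hAA ▸ ha') hab')
    subst this
    by_cases hxb : x = b
    · subst hxb; omega
    · refine ih (S.erase b) f g ?_ hcf hcf' ?_ ?_ x (Finset.mem_erase.2 ⟨hxb, hx⟩)
      · rw [hB, Finset.card_erase_of_mem hb]; omega
      · rw [hB, hB', hBB]
      · rw [hA, hA', hAA]

lemma cf_exists : ∀ (N : ℕ) (S A B : Finset ℕ), B.card = N → Bal S A B →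
    ∃ f, CF S f ∧ nmax S f = A ∧ nmin S f = B := by
  intro N
  induction N with
  | zero =>
    rintro S A B hN ⟨-, -, h, -⟩
    have hA : A = ∅ := by rw [← Finset.card_eq_zero]; omega
    have hB : B = ∅ := by rw [← Finset.card_eq_zero]; omega
    subst hA hB
    refine ⟨id, ⟨by simp, fun a _ b _ c _ d _ => by simp only [id]; omega⟩, ?_, ?_⟩
    · ext x; simp only [mem_nmax, id, Finset.notMem_empty, iff_false]; rintro ⟨_, y, _, _, _⟩; omega
    · ext x; simp [mem_nmin]
  | succ N ih =>
    rintro S A B hN ⟨hAS, hBS, hcard, hbal⟩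
    obtain ⟨b, hb, hmin⟩ := exists_min_nmin (Finset.card_pos.1 (by omega : 0 < B.card))
    have hbS := hBS hb
    have hne : (A.filter (· < b)).Nonempty := by
      rw [← Finset.card_pos]
      refine lt_of_lt_of_le ?_ (hbal b hbS)
      exact Finset.card_pos.2 ⟨b, by simp [hb]⟩
    obtain ⟨a, haa, hmax⟩ : ∃ a ∈ A.filter (· < b), ∀ x ∈ A.filter (· < b), x ≤ a :=
      ⟨_, Finset.max'_mem _ hne, fun x hx => Finset.le_max' _ x hx⟩
    simp only [Finset.mem_filter] at haa hmax
    obtain ⟨haA, hab⟩ := haa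
    have haS := hAS haA
    obtain ⟨c, hc⟩ : ∃ c, c = if b ∈ A then b else a := ⟨_, rfl⟩
    have hcA : c ∈ A := by rw [hc]; split_ifs <;> assumption
    have hcb : c ≤ b := by rw [hc]; split_ifs <;> omega
    have hbal' : Bal (S.erase b) (A.erase c) (B.erase b) := by
      refine ⟨?_, Finset.erase_subset_erase _ hBS, ?_, ?_⟩
      · intro x hx
        rw [Finset.mem_erase] at hx ⊢
        refine ⟨?_, hAS hx.2⟩
        rintro rfl
        rw [if_pos hx.2] at hc
        exact hx.1 hc.symm
      · rw [Finset.card_erase_of_mem hb, Finset.card_erase_of_mem hcA, hcard]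
      · intro s hs
        rw [Finset.mem_erase] at hs
        rcases lt_or_gt_of_ne hs.1 with hsb | hsb
        · rw [Finset.filter_eq_empty_iff.2]
          · simp
          · intro x hx; have := hmin x (Finset.mem_of_mem_erase hx); omega
        · have := hbal s hs.2
          rw [card_filter_erase hb, card_filter_erase hcA, if_pos (by omega),
            if_pos (by omega)] at this
          omega
    obtain ⟨g, ⟨hg1, hg2⟩, hgA, hgB⟩ := ih _ _ _ (by rw [Finset.card_erase_of_mem hb]; omega) hbal'
    -- facts about g
    have hsm : ∀ x ∈ S, x < b → g x = x := by
      intro x hx hxb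
      by_contra hne
      have : x ∈ B.erase b := hgB ▸ mem_nmin.2 ⟨Finset.mem_erase.2 ⟨by omega, hx⟩, hne⟩
      have := hmin x (Finset.mem_of_mem_erase this)
      omega
    have hga := hsm a haS hab
    -- elements strictly between are singletons
    have hsing : ∀ x ∈ S, a < x → x < b → ∀ y ∈ S, y ≠ b → g y = g x → y = x := by
      intro x hx hax hxb y hy hyb e
      have hgx := hsm x hx hxb
      have := (hg1 y (Finset.mem_erase.2 ⟨hyb, hy⟩)).2.1
      rcases eq_or_lt_of_le this with h | h
      · omega
      · have : x ∈ A.erase c := by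
          rw [← hgA]
          exact mem_nmax.2 ⟨Finset.mem_erase.2 ⟨by omega, hx⟩, y, Finset.mem_erase.2 ⟨hyb, hy⟩,
            by omega, e⟩
        have := hmax x ⟨Finset.mem_of_mem_erase this, hxb⟩
        omega
    have hupd : ∀ x, x ≠ b → Function.update g b a x = g x := fun x hx => by simp [hx]
    have hCF : CF S (Function.update g b a) := by
      refine ⟨?_, ?_⟩
      · intro x hx
        by_cases hxb : x = b
        · subst hxb
          simp only [Function.update_self]
          rw [hupd a (by omega)]
          exact ⟨haS, hab.le, hga⟩
        · rw [hupd x hxb]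
          have := hg1 x (Finset.mem_erase.2 ⟨hxb, hx⟩)
          rw [Finset.mem_erase] at this
          rw [hupd _ this.1.1]
          exact ⟨this.1.2, this.2⟩
      · intro x hx y hy z hz w hw hxy hyz hzw e1 e2
        have E := fun {x} (hx : x ∈ S) (hxb : x ≠ b) => Finset.mem_erase.2 ⟨hxb, hx⟩
        have aE : a ∈ S.erase b := E haS (by omega)
        by_cases hxb : x = b
        · subst hxb
          rw [hupd z (by omega), Function.update_self] at e1
          rw [hupd y (by omega), hupd w (by omega)] at e2
          rw [hupd y (by omega), Function.update_self]
          have := hg2 a aE y (E hy (by omega)) z (E hz (by omega)) w (E hw (by omega)) (by omega)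
            hyz hzw (by omega) e2
          omega
        by_cases hyb : y = b
        · subst hyb
          rw [hupd w (by omega), Function.update_self] at e2
          rw [hupd x (by omega), hupd z (by omega)] at e1
          rw [hupd x (by omega), Function.update_self]
          rcases lt_trichotomy x a with hxa | rfl | hxa
          · have := hg2 x (E hx (by omega)) a aE z (E hz (by omega)) w (E hw (by omega)) (by omega)
              (by omega) hzw (by omega) (by omega)
            omega
          · omega
          · have := hsing x hx hxa hxy z hz (by omega) e1.symm
            omega
        by_cases hzb : z = b
        · subst hzb
          rw [hupd x (by omega), Function.update_self] at e1
          rw [hupd y (by omega), hupd w (by omega)] at e2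
          rw [hupd x (by omega), hupd y (by omega)]
          rcases lt_trichotomy y a with hxa | rfl | hxa
          · have := hg2 x (E hx (by omega)) y (E hy (by omega)) a aE w (E hw (by omega)) (by omega)
              (by omega) (by omega) (by omega) (by omega)
            omega
          · omega
          · have := hsing y hy hxa hyz w hw (by omega) e2.symm
            omega
        by_cases hwb : w = b
        · subst hwb
          rw [hupd y (by omega), Function.update_self] at e2
          rw [hupd x (by omega), hupd z (by omega)] at e1
          rw [hupd x (by omega), hupd y (by omega)]
          rcases lt_trichotomy z a with hxa | rfl | hxa
          · have := hg2 x (E hx (by omega)) y (E hy (by omega)) z (E hz (by omega)) a aE (by omega)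
              (by omega) (by omega) (by omega) (by omega)
            omega
          · omega
          · have := hsing z hz hxa hzw x hx (by omega) e1
            omega
        · rw [hupd x hxb, hupd z hzb] at e1
          rw [hupd y hyb, hupd w hwb] at e2
          rw [hupd x hxb, hupd y hyb]
          exact hg2 x (E hx hxb) y (E hy hyb) z (E hz hzb) w (E hw hwb) hxy hyz hzw e1 e2
    have hBfin : nmin S (Function.update g b a) = B := by
      ext x
      rw [mem_nmin]
      by_cases hxb : x = b
      · subst hxb
        simp only [Function.update_self, hb, hbS, true_and, iff_true]
        omega
      · rw [hupd x hxb]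
        have : x ∈ nmin (S.erase b) g ↔ x ∈ B.erase b := by rw [hgB]
        rw [mem_nmin, Finset.mem_erase, Finset.mem_erase] at this
        tauto
    refine ⟨Function.update g b a, hCF, ?_, hBfin⟩
    have key : ∀ x, x ∈ A.erase c ↔ (x ≠ b ∧ x ∈ S) ∧ ∃ y, (y ≠ b ∧ y ∈ S) ∧ x < y ∧ g y = g x := by
      intro x
      rw [← hgA, mem_nmax]
      simp only [Finset.mem_erase]
    ext x
    rw [mem_nmax]
    by_cases hxb : x = b
    · subst hxb
      simp only [Function.update_self, hbS, true_and]
      by_cases hbA : x ∈ A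
      · simp only [hbA, iff_true]
        rw [if_pos hbA] at hc
        have := (key a).1 (Finset.mem_erase.2 ⟨by omega, haA⟩)
        obtain ⟨_, y, ⟨hyb, hy⟩, hay, e⟩ := this
        refine ⟨y, hy, ?_, by rw [hupd y hyb]; omega⟩
        by_contra hcon
        have := hsm y hy (by omega)
        omega
      · simp only [hbA, iff_false]
        rw [if_neg hbA] at hc
        rintro ⟨y, hy, hxy, e⟩
        rw [hupd y (by omega)] at e
        have : a ∈ A.erase c := (key a).2 ⟨⟨by omega, haS⟩, y, ⟨by omega, hy⟩, by omega, by omega⟩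
        rw [Finset.mem_erase] at this
        exact this.1 hc.symm
    · rw [hupd x hxb]
      by_cases hxa : x = a
      · subst hxa
        simp only [haA, haS, true_and, iff_true]
        exact ⟨b, hbS, hab, by simp [hga]⟩
      · have hxc : x ≠ c := by rw [hc]; split_ifs <;> assumption
        have := key x
        rw [Finset.mem_erase] at this
        constructor
        · rintro ⟨hx, y, hy, hxy, e⟩
          refine (this.2 ⟨⟨hxb, hx⟩, y, ⟨?_, hy⟩, hxy, ?_⟩).2
          · rintro rfl
            rw [Function.update_self, hsm x hx hxy] at e
            exact hxa e.symm
          · by_cases hyb : y = b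
            · subst hyb
              rw [Function.update_self, hsm x hx hxy] at e
              exact absurd e.symm hxa
            · rwa [hupd y hyb] at e
        · intro hx
          obtain ⟨⟨_, h1⟩, y, ⟨hyb, hy⟩, h2, h3⟩ := this.1 ⟨hxc, hx⟩
          exact ⟨h1, y, hy, h2, by rwa [hupd y hyb]⟩

/-! ### Polyominoes -/

lemma chx1 (w : List Step) : ∀ h i c, c < countE (w.take i) →
    (colHeightsAux w h).getD c 0 ≤ h + countN (w.take i) := by
  induction w with
  | nil => intro h i c hc; simp [countE] at hc
  | cons s w ih =>
    intro h i c hc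
    cases i with
    | zero => simp [countE] at hc
    | succ i =>
      cases s with
      | E =>
        cases c with
        | zero => simp [colHeightsAux]
        | succ c =>
          have := ih h i c (by simpa [countE] using hc)
          simpa [colHeightsAux, countN] using this
      | N =>
        have := ih (h + 1) i c (by simpa [countE] using hc)
        simp only [colHeightsAux, countN, List.take_succ_cons, List.count_cons_self] at this ⊢
        omega

lemma chx2 (w : List Step) : ∀ h i c, countE (w.take i) ≤ c → c < countE w →
    h + countN (w.take i) ≤ (colHeightsAux w h).getD c 0 := by
  induction w with
  | nil => intro h i c hc hc'; simp [countE] at hc'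
  | cons s w ih =>
    intro h i c hc hc'
    cases s with
    | E =>
      cases c with
      | zero =>
        cases i with
        | zero => simp [colHeightsAux, countN]
        | succ i => simp [countE] at hc
      | succ c =>
        cases i with
        | zero =>
          have := ih h 0 c (by simp [countE]) (by simpa [countE] using hc')
          simpa [colHeightsAux, countN] using this
        | succ i =>
          have := ih h i c (by simpa [countE] using hc) (by simpa [countE] using hc')
          simpa [colHeightsAux, countN] using this
    | N =>
      cases i with
      | zero =>
        have := ih (h + 1) 0 c (by simp [countE]) (by simpa [countE] using hc')
        simp only [colHeightsAux, countN, List.take_zero, List.count_nil] at this ⊢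
        omega
      | succ i =>
        have := ih (h + 1) i c (by simpa [countE] using hc) (by simpa [countE] using hc')
        simp only [colHeightsAux, countN, List.take_succ_cons, List.count_cons_self] at this ⊢
        omega

lemma chx3 (w : List Step) : ∀ h c, c < countE w →
    ∃ p, p < w.length ∧ countE (w.take p) = c ∧
      h + countN (w.take p) = (colHeightsAux w h).getD c 0 := by
  induction w with
  | nil => intro h c hc'; simp [countE] at hc'
  | cons s w ih =>
    intro h c hc'
    cases s with
    | E =>
      cases c with
      | zero => exact ⟨0, by simp, by simp [countE], by simp [colHeightsAux, countN]⟩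
      | succ c =>
        obtain ⟨p, h1, h2, h3⟩ := ih h c (by simpa [countE] using hc')
        exact ⟨p + 1, by simpa using h1, by simpa [countE] using h2,
          by simpa [colHeightsAux, countN] using h3⟩
    | N =>
      obtain ⟨p, h1, h2, h3⟩ := ih (h + 1) c (by simpa [countE] using hc')
      refine ⟨p + 1, by simpa using h1, by simpa [countE] using h2, ?_⟩
      simp only [colHeightsAux, countN, List.take_succ_cons, List.count_cons_self] at h3 ⊢
      omega

lemma countEN (w : List Step) : countE w + countN w = w.length := by
  induction w with
  | nil => rfl
  | cons s w ih =>
    cases s <;> simp [countE, countN] at ih ⊢ <;> omega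

lemma countEN_take (w : List Step) (i : ℕ) (hi : i ≤ w.length) :
    countE (w.take i) + countN (w.take i) = i := by
  rw [countEN]; simp [hi]

def Dom (n : ℕ) (u l : List Step) : Prop :=
  ∀ i, 0 < i → i < n + 1 → countN (l.take i) < countN (u.take i)

lemma mem_pathPts {w : List Step} {p : ℕ × ℕ} :
    p ∈ pathPts w ↔ ∃ i, i ≤ w.length ∧ pathPos (w.take i) = p := by
  simp [pathPts, Nat.lt_succ_iff]

lemma countE_take_le (w : List Step) (i : ℕ) : countE (w.take i) ≤ countE w :=
  (List.take_sublist i w).count_le _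

lemma countN_take_le (w : List Step) (i : ℕ) : countN (w.take i) ≤ countN w :=
  (List.take_sublist i w).count_le _

lemma dom_iff {n m k : ℕ} (hmk : m + k = n + 1) {l u : List Step} (hlE : countE l = m)
    (hlN : countN l = k) (huE : countE u = m) (huN : countN u = k) :
    ((∀ i < m, colHeight l i ≤ colHeight u i) ∧ pathPts u ∩ pathPts l = {(0, 0), (m, k)}) ↔
      Dom n u l := by
  have hl : l.length = n + 1 := by rw [← countEN]; omega
  have hu : u.length = n + 1 := by rw [← countEN]; omega
  constructor
  · rintro ⟨habove, hmeet⟩ i hi0 hin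
    have e1 := countEN_take l i (by omega)
    have e2 := countEN_take u i (by omega)
    by_contra hcon
    push Not at hcon
    rcases eq_or_lt_of_le hcon with h | h
    · have : pathPos (u.take i) ∈ pathPts u ∩ pathPts l := by
        rw [Finset.mem_inter]
        refine ⟨mem_pathPts.2 ⟨i, by omega, rfl⟩, mem_pathPts.2 ⟨i, by omega, ?_⟩⟩
        simp only [pathPos, Prod.mk.injEq]
        omega
      rw [hmeet] at this
      simp only [pathPos, Finset.mem_insert, Finset.mem_singleton, Prod.mk.injEq] at this
      omega
    · have hlt : countE (l.take i) < countE (u.take i) := by omega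
      have hm : countE (l.take i) < m := by
        have := countE_take_le u i
        omega
      have h1 := habove _ hm
      have h2 := chx1 u 0 i _ hlt
      have h3 := chx2 l 0 i _ le_rfl (by omega)
      unfold colHeight at h1
      omega
  · intro hD
    have hD' : ∀ i, i ≤ n + 1 → countN (l.take i) ≤ countN (u.take i) := by
      intro i hi
      rcases Nat.eq_zero_or_pos i with rfl | h0
      · simp [countN]
      · rcases eq_or_lt_of_le hi with rfl | h
        · rw [List.take_of_length_le (by omega), List.take_of_length_le (by omega)]; omega
        · exact (hD i h0 h).le
    refine ⟨?_, ?_⟩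
    · intro c hc
      obtain ⟨p, h1, h2, h3⟩ := chx3 l 0 c (by omega)
      have h4 := hD' p (by omega)
      have e1 := countEN_take l p (by omega)
      have e2 := countEN_take u p (by omega)
      have h5 := chx2 u 0 p c (by omega) (by omega)
      unfold colHeight
      omega
    · ext p
      simp only [Finset.mem_inter, mem_pathPts, Finset.mem_insert, Finset.mem_singleton]
      constructor
      · rintro ⟨⟨i, hi, rfl⟩, ⟨j, hj, hij⟩⟩
        simp only [pathPos, Prod.mk.injEq] at hij ⊢
        have e1 := countEN_take l j (by omega)
        have e2 := countEN_take u i (by omega)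
        have : i = j := by omega
        subst this
        rcases Nat.eq_zero_or_pos i with rfl | h0
        · left; omega
        · rcases eq_or_lt_of_le hi with rfl | h
          · right
            rw [List.take_of_length_le (by omega)]; omega
          · have := hD i h0 (by omega)
            omega
      · rintro (rfl | rfl)
        · exact ⟨⟨0, by omega, by simp [pathPos, countE, countN]⟩,
            ⟨0, by omega, by simp [pathPos, countE, countN]⟩⟩
        · refine ⟨⟨n + 1, by omega, ?_⟩, ⟨n + 1, by omega, ?_⟩⟩
          · rw [List.take_of_length_le (by omega)]; simp [pathPos, *]
          · rw [List.take_of_length_le (by omega)]; simp [pathPos, *]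

lemma countN_take_succ (w : List Step) (i : ℕ) :
    countN (w.take (i + 1)) = countN (w.take i) + if w[i]? = some Step.N then 1 else 0 := by
  rw [List.take_add_one]
  unfold countN
  rw [List.count_append]
  congr 1
  rcases w[i]? with _ | s
  · simp
  · cases s <;> simp

def Aof (n : ℕ) (u : List Step) : Finset ℕ :=
  (Finset.Icc 1 n).filter (fun i => u[i]? = some Step.N)

def Bof (n : ℕ) (l : List Step) : Finset ℕ :=
  (Finset.Icc 1 n).filter (fun i => l[i - 1]? = some Step.N)

lemma count_A {n : ℕ} {u : List Step} (h0 : u[0]? = some Step.N) : ∀ i, i ≤ n →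
    countN (u.take (i + 1)) = 1 + ((Aof n u).filter (· < i + 1)).card := by
  intro i
  induction i with
  | zero =>
    intro _
    rw [countN_take_succ, if_pos h0, Finset.filter_eq_empty_iff.2]
    · simp [countN]
    · intro x hx; simp [Aof] at hx; omega
  | succ i ih =>
    intro hi
    rw [countN_take_succ, ih (by omega)]
    split_ifs with h
    · have : (Aof n u).filter (· < i + 1 + 1) = insert (i + 1) ((Aof n u).filter (· < i + 1)) := by
        ext x
        simp only [Finset.mem_filter, Finset.mem_insert]
        constructor
        · rintro ⟨h1, h2⟩
          by_cases hx : x = i + 1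
          · exact Or.inl hx
          · exact Or.inr ⟨h1, by omega⟩
        · rintro (rfl | ⟨h1, h2⟩)
          · exact ⟨by simp [Aof, h, hi], by omega⟩
          · exact ⟨h1, by omega⟩
      rw [this, Finset.card_insert_of_notMem (by simp)]
      omega
    · have : (Aof n u).filter (· < i + 1 + 1) = (Aof n u).filter (· < i + 1) := by
        refine Finset.filter_congr fun x hx => ?_
        have : x ≠ i + 1 := by
          rintro rfl
          simp [Aof] at hx
          exact h hx.2
        omega
      rw [this, add_zero]

lemma count_B {n : ℕ} {u : List Step} : ∀ i, i ≤ n →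
    countN (u.take i) = ((Bof n u).filter (· ≤ i)).card := by
  intro i
  induction i with
  | zero =>
    intro _
    rw [Finset.filter_eq_empty_iff.2]
    · simp [countN]
    · intro x hx; simp [Bof] at hx; omega
  | succ i ih =>
    intro hi
    rw [countN_take_succ, ih (by omega)]
    split_ifs with h
    · have : (Bof n u).filter (· ≤ i + 1) = insert (i + 1) ((Bof n u).filter (· ≤ i)) := by
        ext x
        simp only [Finset.mem_filter, Finset.mem_insert]
        constructor
        · rintro ⟨h1, h2⟩
          by_cases hx : x = i + 1
          · exact Or.inl hx
          · exact Or.inr ⟨h1, by omega⟩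
        · rintro (rfl | ⟨h1, h2⟩)
          · exact ⟨by simp [Bof, h, hi], by omega⟩
          · exact ⟨h1, by omega⟩
      rw [this, Finset.card_insert_of_notMem (by simp)]
    · have : (Bof n u).filter (· ≤ i + 1) = (Bof n u).filter (· ≤ i) := by
        refine Finset.filter_congr fun x hx => ?_
        have : x ≠ i + 1 := by
          rintro rfl
          simp [Bof] at hx
          exact h hx.2
        omega
      rw [this, add_zero]

/-- The common encoding. -/
abbrev TT (n k : ℕ) : Type :=
  {p : Finset ℕ × Finset ℕ // Bal (Finset.Icc 1 n) p.1 p.2 ∧ p.2.card + 1 = k}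

lemma Aof_filter_all {n : ℕ} {u : List Step} : (Aof n u).filter (· < n + 1) = Aof n u := by
  refine Finset.filter_true_of_mem fun x hx => ?_
  simp [Aof] at hx; omega

lemma Bof_filter_all {n : ℕ} {u : List Step} : (Bof n u).filter (· ≤ n) = Bof n u := by
  refine Finset.filter_true_of_mem fun x hx => ?_
  simp [Bof] at hx; omega

lemma dom_ends {n k : ℕ} (hn : 1 ≤ n) {l u : List Step} (hl : l.length = n + 1)
    (hlN : countN l = k) (huN : countN u = k) (hD : Dom n u l) :
    u[0]? = some Step.N ∧ l[n]? = some Step.N := by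
  constructor
  · by_contra h
    have h1 := hD 1 (by omega) (by omega)
    have := countN_take_succ u 0
    rw [if_neg h] at this
    simp only [zero_add] at this
    simp [countN] at this h1
    omega
  · by_contra h
    have h1 := hD n (by omega) (by omega)
    have := countN_take_succ l n
    rw [if_neg h, List.take_of_length_le (by omega)] at this
    have := countN_take_le u n
    omega

lemma step_ext {a b : Option Step} (ha : a.isSome) (hb : b.isSome)
    (h : a = some Step.N ↔ b = some Step.N) : a = b := by
  rcases a with _ | a
  · simp at ha
  rcases b with _ | b
  · simp at hb
  cases a <;> cases b <;> simp_all

lemma bal_of_dom {n m k : ℕ} (hn : 1 ≤ n) (hmk : m + k = n + 1) {l u : List Step}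
    (hlE : countE l = m)
    (hlN : countN l = k) (huE : countE u = m) (huN : countN u = k) (hD : Dom n u l) :
    Bal (Finset.Icc 1 n) (Aof n u) (Bof n l) ∧ (Bof n l).card + 1 = k := by
  have hl : l.length = n + 1 := by rw [← countEN]; omega
  have hu : u.length = n + 1 := by rw [← countEN]; omega
  obtain ⟨h0, h1⟩ := dom_ends hn hl hlN huN hD
  have hA := count_A (n := n) h0 n le_rfl
  rw [Aof_filter_all, List.take_of_length_le (by omega)] at hA
  have hB := count_B (n := n) (u := l) n le_rfl
  rw [Bof_filter_all] at hB
  have hl' := countN_take_succ l n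
  rw [if_pos h1, List.take_of_length_le (by omega)] at hl'
  refine ⟨⟨Finset.filter_subset _ _, Finset.filter_subset _ _, by omega, ?_⟩, by omega⟩
  intro s hs
  rw [Finset.mem_Icc] at hs
  have := hD s (by omega) (by omega)
  obtain ⟨s, rfl⟩ : ∃ t, s = t + 1 := ⟨s - 1, by omega⟩
  rw [count_B (n := n) (s + 1) (by omega), count_A (n := n) h0 s (by omega)] at this
  omega

lemma card_poly (n m k : ℕ) (hn : 1 ≤ n) (hmk : m + k = n + 1) :
    Nat.card (Polyomino m k) = Nat.card (TT n k) := by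
  have hdom : ∀ P : Polyomino m k, Dom n P.upper P.lower := fun P =>
    (dom_iff hmk P.lowerE P.lowerN P.upperE P.upperN).1 ⟨P.above, P.meet⟩
  refine Nat.card_eq_of_bijective (fun P => (⟨(Aof n P.upper, Bof n P.lower),
    bal_of_dom hn hmk P.lowerE P.lowerN P.upperE P.upperN (hdom P)⟩ : TT n k)) ⟨?_, ?_⟩
  · intro P Q h
    have hP := hdom P
    have hQ := hdom Q
    simp only [Subtype.mk.injEq, Prod.mk.injEq] at h
    obtain ⟨hA, hB⟩ := h
    obtain ⟨l, u, e1, e2, e3, e4, e5, e6⟩ := P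
    obtain ⟨l', u', f1, f2, f3, f4, f5, f6⟩ := Q
    simp only at hA hB hP hQ
    have hl : l.length = n + 1 := by rw [← countEN]; omega
    have hu : u.length = n + 1 := by rw [← countEN]; omega
    have hl' : l'.length = n + 1 := by rw [← countEN]; omega
    have hu' : u'.length = n + 1 := by rw [← countEN]; omega
    obtain ⟨a1, a2⟩ := dom_ends hn hl e2 e4 hP
    obtain ⟨b1, b2⟩ := dom_ends hn hl' f2 f4 hQ
    have hU : u = u' := by
      refine List.ext_getElem? fun i => ?_
      by_cases hi : i ≤ n
      · rcases Nat.eq_zero_or_pos i with rfl | h0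
        · rw [a1, b1]
        · refine step_ext (by simp; omega) (by simp; omega) ?_
          have : i ∈ Aof n u ↔ i ∈ Aof n u' := by rw [hA]
          simpa [Aof, hi, Nat.succ_le_of_lt h0, Nat.pos_iff_ne_zero.1 h0] using this
      · rw [List.getElem?_eq_none (by omega), List.getElem?_eq_none (by omega)]
    have hL : l = l' := by
      refine List.ext_getElem? fun i => ?_
      by_cases hi : i ≤ n
      · rcases eq_or_lt_of_le hi with rfl | h0
        · rw [a2, b2]
        · refine step_ext (by simp; omega) (by simp; omega) ?_
          have : i + 1 ∈ Bof n l ↔ i + 1 ∈ Bof n l' := by rw [hB]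
          simpa [Bof, Nat.succ_le_of_lt h0, h0] using this
      · rw [List.getElem?_eq_none (by omega), List.getElem?_eq_none (by omega)]
    subst hU hL
    rfl
  · rintro ⟨⟨A, B⟩, ⟨hAS, hBS, hcard, hbal⟩, hk⟩
    simp only at hAS hBS hcard hbal hk
    obtain ⟨u, hu⟩ : ∃ u, u = (List.range (n + 1)).map
      (fun i => if i = 0 ∨ i ∈ A then Step.N else Step.E) := ⟨_, rfl⟩
    obtain ⟨l, hl⟩ : ∃ l, l = (List.range (n + 1)).map
      (fun i => if i = n ∨ i + 1 ∈ B then Step.N else Step.E) := ⟨_, rfl⟩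
    have hul : u.length = n + 1 := by simp [hu]
    have hll : l.length = n + 1 := by simp [hl]
    have hui : ∀ i, i ≤ n → (u[i]? = some Step.N ↔ i = 0 ∨ i ∈ A) := by
      intro i hi
      simp only [hu, List.getElem?_map, List.getElem?_range (Nat.lt_succ_of_le hi), Option.map_some]
      split_ifs with h <;> simp [h]
    have hli : ∀ i, i ≤ n → (l[i]? = some Step.N ↔ i = n ∨ i + 1 ∈ B) := by
      intro i hi
      simp only [hl, List.getElem?_map, List.getElem?_range (Nat.lt_succ_of_le hi), Option.map_some]
      split_ifs with h <;> simp [h]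
    have hA : Aof n u = A := by
      ext i
      simp only [Aof, Finset.mem_filter, Finset.mem_Icc]
      constructor
      · rintro ⟨⟨h1, h2⟩, h3⟩
        rcases (hui i h2).1 h3 with h | h
        · omega
        · exact h
      · intro hi
        have := hAS hi
        rw [Finset.mem_Icc] at this
        exact ⟨this, (hui i this.2).2 (Or.inr hi)⟩
    have hB : Bof n l = B := by
      ext i
      simp only [Bof, Finset.mem_filter, Finset.mem_Icc]
      constructor
      · rintro ⟨⟨h1, h2⟩, h3⟩
        rcases (hli (i - 1) (by omega)).1 h3 with h | h
        · omega
        · rwa [Nat.sub_add_cancel h1] at h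
      · intro hi
        have := hBS hi
        rw [Finset.mem_Icc] at this
        refine ⟨this, (hli (i - 1) (by omega)).2 (Or.inr ?_)⟩
        rwa [Nat.sub_add_cancel this.1]
    have h0 : u[0]? = some Step.N := (hui 0 (by omega)).2 (Or.inl rfl)
    have h1 : l[n]? = some Step.N := (hli n le_rfl).2 (Or.inl rfl)
    have cA := count_A (n := n) h0 n le_rfl
    rw [Aof_filter_all, List.take_of_length_le (by omega), hA] at cA
    have cB := count_B (n := n) (u := l) n le_rfl
    rw [Bof_filter_all, hB] at cB
    have cl := countN_take_succ l n
    rw [if_pos h1, List.take_of_length_le (by omega)] at cl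
    have huN : countN u = k := by omega
    have hlN : countN l = k := by omega
    have huE : countE u = m := by have := countEN u; omega
    have hlE : countE l = m := by have := countEN l; omega
    have hD : Dom n u l := by
      intro s hs0 hs
      obtain ⟨s, rfl⟩ : ∃ t, s = t + 1 := ⟨s - 1, by omega⟩
      rw [count_B (n := n) (s + 1) (by omega), count_A (n := n) h0 s (by omega), hA, hB]
      have := hbal (s + 1) (by rw [Finset.mem_Icc]; omega)
      omega
    obtain ⟨hab, hme⟩ := (dom_iff hmk hlE hlN huE huN).2 hD
    refine ⟨⟨l, u, hlE, hlN, huE, huN, hab, hme⟩, ?_⟩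
    simp only [hA, hB]

/-! ### Noncrossing partitions -/

def Rel {n : ℕ} (P : SetPartition n) (x y : ℕ) : Prop := ∃ β ∈ P.blocks, x ∈ β ∧ y ∈ β

noncomputable def lab {n : ℕ} (P : SetPartition n) (x : ℕ) : ℕ := sInf {y | Rel P x y}

def blk (S : Finset ℕ) (f : ℕ → ℕ) : Finset (Finset ℕ) :=
  (S \ nmin S f).image (fun x => S.filter (fun y => f y = x))

section
variable {n : ℕ} (P : SetPartition n)

lemma blk_uniq {β γ : Finset ℕ} (hβ : β ∈ P.blocks) (hγ : γ ∈ P.blocks) {x : ℕ} (h1 : x ∈ β)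
    (h2 : x ∈ γ) : β = γ := by
  by_contra h
  exact Finset.disjoint_left.1 (P.disjoint β hβ γ hγ h) h1 h2

lemma rel_symm {x y : ℕ} (h : Rel P x y) : Rel P y x := by
  obtain ⟨β, h1, h2, h3⟩ := h
  exact ⟨β, h1, h3, h2⟩

lemma rel_trans {x y z : ℕ} (h : Rel P x y) (h' : Rel P y z) : Rel P x z := by
  obtain ⟨β, h1, h2, h3⟩ := h
  obtain ⟨γ, k1, k2, k3⟩ := h'
  obtain rfl := blk_uniq P h1 k1 h3 k2
  exact ⟨β, h1, h2, k3⟩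

lemma rel_refl {x : ℕ} (h : x ∈ Finset.Icc 1 n) : Rel P x x := by
  obtain ⟨β, h1, h2⟩ := (P.cover x).1 h
  exact ⟨β, h1, h2, h2⟩

lemma rel_mem {x y : ℕ} (h : Rel P x y) : y ∈ Finset.Icc 1 n := by
  obtain ⟨β, h1, h2, h3⟩ := h
  exact (P.cover y).2 ⟨β, h1, h3⟩

lemma rel_lab {x : ℕ} (h : x ∈ Finset.Icc 1 n) : Rel P x (lab P x) :=
  Nat.sInf_mem (s := {y | Rel P x y}) ⟨x, rel_refl P h⟩

lemma lab_le {x y : ℕ} (h : Rel P x y) : lab P x ≤ y := Nat.sInf_le h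

lemma lab_eq {x y : ℕ} (hx : x ∈ Finset.Icc 1 n) (hy : y ∈ Finset.Icc 1 n) :
    lab P x = lab P y ↔ Rel P x y := by
  constructor
  · intro h
    refine rel_trans P (rel_lab P hx) ?_
    rw [h]
    exact rel_symm P (rel_lab P hy)
  · intro h
    exact le_antisymm (lab_le P (rel_trans P h (rel_lab P hy)))
      (lab_le P (rel_trans P (rel_symm P h) (rel_lab P hx)))

lemma lab_CF (hP : IsNoncrossing P.blocks) : CF (Finset.Icc 1 n) (lab P) := by
  refine ⟨?_, ?_⟩
  · intro x hx
    have h := rel_lab P hx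
    exact ⟨rel_mem P h, lab_le P (rel_refl P hx), ((lab_eq P hx (rel_mem P h)).2 h).symm⟩
  · intro a ha b hb c hc d hd hab hbc hcd h1 h2
    rw [lab_eq P ha hc] at h1
    rw [lab_eq P hb hd] at h2
    rw [lab_eq P ha hb]
    obtain ⟨β, b1, b2, b3⟩ := h1
    obtain ⟨γ, c1, c2, c3⟩ := h2
    obtain rfl := hP a b c d hab hbc hcd β b1 γ c1 b2 b3 c2 c3
    exact ⟨β, b1, b2, c2⟩

lemma blocks_eq : P.blocks = blk (Finset.Icc 1 n) (lab P) := by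
  ext β
  simp only [blk, Finset.mem_image, Finset.mem_sdiff, mem_nmin]
  have key : ∀ β ∈ P.blocks, ∀ x ∈ β, (Finset.Icc 1 n).filter (fun y => lab P y = lab P x) = β := by
    intro β hβ x hx
    have hxn := (P.cover x).2 ⟨β, hβ, hx⟩
    ext y
    rw [Finset.mem_filter]
    constructor
    · rintro ⟨hy, e⟩
      rw [lab_eq P hy hxn] at e
      obtain ⟨γ, c1, c2, c3⟩ := e
      obtain rfl := blk_uniq P hβ c1 hx c3
      exact c2
    · intro hy
      have hyn := (P.cover y).2 ⟨β, hβ, hy⟩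
      exact ⟨hyn, (lab_eq P hyn hxn).2 ⟨β, hβ, hy, hx⟩⟩
  constructor
  · intro hβ
    have hne : β.Nonempty := by
      rw [Finset.nonempty_iff_ne_empty]
      rintro rfl
      exact P.not_empty_mem hβ
    obtain ⟨x, hx⟩ := hne
    have hxn := (P.cover x).2 ⟨β, hβ, hx⟩
    have hr := rel_lab P hxn
    have hl : lab P (lab P x) = lab P x := ((lab_eq P hxn (rel_mem P hr)).2 hr).symm
    exact ⟨lab P x, ⟨rel_mem P hr, fun h => h.2 hl⟩, key β hβ x hx⟩
  · rintro ⟨x, ⟨hx, hx'⟩, rfl⟩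
    have hl : lab P x = x := by
      by_contra h
      exact hx' ⟨hx, h⟩
    obtain ⟨β, h1, h2⟩ := (P.cover x).1 hx
    have := key β h1 x h2
    rw [hl] at this
    rwa [this]
end

lemma blk_card (S : Finset ℕ) (f : ℕ → ℕ) : (blk S f).card = S.card - (nmin S f).card := by
  unfold blk
  rw [Finset.card_image_of_injOn, Finset.card_sdiff_of_subset (show nmin S f ⊆ S from Finset.filter_subset _ _)]
  intro x hx y hy h
  simp only [Finset.coe_sdiff, Set.mem_diff, Finset.mem_coe, mem_nmin, not_and, not_not] at hx hy
  have : x ∈ S.filter (fun z => f z = x) := by simp [hx.1, hx.2 hx.1]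
  simp only at h
  rw [h, Finset.mem_filter] at this
  have := hx.2 hx.1
  omega

lemma nmin_congr {S : Finset ℕ} {f g : ℕ → ℕ} (h : ∀ x ∈ S, f x = g x) : nmin S f = nmin S g :=
  Finset.filter_congr fun x hx => by rw [h x hx]

lemma nmax_congr {S : Finset ℕ} {f g : ℕ → ℕ} (h : ∀ x ∈ S, f x = g x) : nmax S f = nmax S g := by
  ext x
  rw [mem_nmax, mem_nmax]
  constructor
  · rintro ⟨h1, y, h2, h3, h4⟩
    exact ⟨h1, y, h2, h3, by rw [← h x h1, ← h y h2, h4]⟩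
  · rintro ⟨h1, y, h2, h3, h4⟩
    exact ⟨h1, y, h2, h3, by rw [h x h1, h y h2, h4]⟩

lemma blk_congr {S : Finset ℕ} {f g : ℕ → ℕ} (h : ∀ x ∈ S, f x = g x) : blk S f = blk S g := by
  unfold blk
  rw [nmin_congr h]
  congr 1
  funext x
  exact Finset.filter_congr fun y hy => by rw [h y hy]

lemma mem_blk {S : Finset ℕ} {f : ℕ → ℕ} {β : Finset ℕ} :
    β ∈ blk S f ↔ ∃ x ∈ S, f x = x ∧ S.filter (fun y => f y = x) = β := by
  simp only [blk, Finset.mem_image, Finset.mem_sdiff, mem_nmin]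
  constructor
  · rintro ⟨x, ⟨h1, h2⟩, h3⟩
    exact ⟨x, h1, by by_contra h; exact h2 ⟨h1, h⟩, h3⟩
  · rintro ⟨x, h1, h2, h3⟩
    exact ⟨x, ⟨h1, fun h => h.2 h2⟩, h3⟩

def mkP {n : ℕ} {f : ℕ → ℕ} (h : CF (Finset.Icc 1 n) f) : SetPartition n where
  blocks := blk (Finset.Icc 1 n) f
  not_empty_mem := by
    intro hm
    obtain ⟨x, h1, h2, h3⟩ := mem_blk.1 hm
    rw [Finset.filter_eq_empty_iff] at h3
    exact h3 h1 h2
  cover := by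
    intro i
    constructor
    · intro hi
      obtain ⟨h1, h2, h3⟩ := h.1 i hi
      exact ⟨_, mem_blk.2 ⟨f i, h1, h3, rfl⟩, Finset.mem_filter.2 ⟨hi, rfl⟩⟩
    · rintro ⟨β, hβ, hi⟩
      obtain ⟨x, h1, h2, rfl⟩ := mem_blk.1 hβ
      exact (Finset.mem_filter.1 hi).1
  disjoint := by
    intro β hβ γ hγ hne
    obtain ⟨x, h1, h2, rfl⟩ := mem_blk.1 hβ
    obtain ⟨y, k1, k2, rfl⟩ := mem_blk.1 hγ
    rw [Finset.disjoint_left]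
    intro z hz hz'
    rw [Finset.mem_filter] at hz hz'
    exact hne (by rw [← hz.2, ← hz'.2])

lemma mkP_nc {n : ℕ} {f : ℕ → ℕ} (h : CF (Finset.Icc 1 n) f) : IsNoncrossing (mkP h).blocks := by
  intro a b c d hab hbc hcd β hβ γ hγ ha hc hb hd
  obtain ⟨x, h1, h2, rfl⟩ := mem_blk.1 hβ
  obtain ⟨y, k1, k2, rfl⟩ := mem_blk.1 hγ
  rw [Finset.mem_filter] at ha hb hc hd
  have := h.2 a ha.1 b hb.1 c hc.1 d hd.1 hab hbc hcd (by omega) (by omega)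
  have : x = y := by omega
  rw [this]

lemma mkP_lab {n : ℕ} {f : ℕ → ℕ} (h : CF (Finset.Icc 1 n) f) :
    ∀ x ∈ Finset.Icc 1 n, lab (mkP h) x = f x := by
  have hrel : ∀ x ∈ Finset.Icc 1 n, ∀ y ∈ Finset.Icc 1 n, (Rel (mkP h) x y ↔ f x = f y) := by
    intro x hx y hy
    constructor
    · rintro ⟨β, hβ, h1, h2⟩
      obtain ⟨z, _, _, rfl⟩ := mem_blk.1 hβ
      rw [Finset.mem_filter] at h1 h2
      omega
    · intro e
      obtain ⟨h1, h2, h3⟩ := h.1 x hx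
      exact ⟨_, mem_blk.2 ⟨f x, h1, h3, rfl⟩, Finset.mem_filter.2 ⟨hx, rfl⟩,
        Finset.mem_filter.2 ⟨hy, e.symm⟩⟩
  intro x hx
  obtain ⟨h1, h2, h3⟩ := h.1 x hx
  apply le_antisymm
  · exact lab_le _ ((hrel x hx _ h1).2 h3.symm)
  · have hr := rel_lab (mkP h) hx
    have hm := rel_mem _ hr
    rw [(hrel x hx _ hm).1 hr]
    exact (h.1 _ hm).2.1

lemma card_nc (n k : ℕ) (hk : 1 ≤ k) (hkn : k ≤ n) :
    Nat.card (NC n k) = Nat.card (TT n k) := by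
  refine Nat.card_eq_of_bijective (fun P => (⟨(nmax (Finset.Icc 1 n) (lab P.1),
    nmin (Finset.Icc 1 n) (lab P.1)), cf_bal _ _ _ rfl (lab_CF P.1 P.2.1), ?_⟩ : TT n k)) ⟨?_, ?_⟩
  · have h := P.2.2
    rw [blocks_eq, blk_card, Nat.card_Icc] at h
    simp only
    omega
  · rintro ⟨P, hP, hPc⟩ ⟨Q, hQ, hQc⟩ h
    simp only [Subtype.mk.injEq, Prod.mk.injEq] at h ⊢
    have hfg := cf_unique _ _ _ _ rfl (lab_CF P hP) (lab_CF Q hQ) h.2 h.1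
    have hb : P.blocks = Q.blocks := by rw [blocks_eq P, blocks_eq Q, blk_congr hfg]
    cases P
    cases Q
    simp only at hb
    subst hb
    rfl
  · rintro ⟨⟨A, B⟩, hbal, hc⟩
    simp only at hbal hc
    obtain ⟨f, hf, hA, hB⟩ := cf_exists _ _ _ _ rfl hbal
    refine ⟨⟨mkP hf, mkP_nc hf, ?_⟩, ?_⟩
    · change (blk _ _).card = _
      rw [blk_card, hB, Nat.card_Icc]
      omega
    · simp only [nmax_congr (mkP_lab hf), nmin_congr (mkP_lab hf), hA, hB]

/-- For all `n ≥ k ≥ 1`, the number of noncrossing partitions of `{1, …, n}` with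
exactly `n - k + 1` blocks equals the number of parallelogram polyominoes of size
`(n-k+1) × k`. -/
theorem card_NC_eq_card_PP (n k : ℕ) (hk : 1 ≤ k) (hkn : k ≤ n) :
    Nat.card (NC n k) = Nat.card (Polyomino (n - k + 1) k) := by
  rw [card_nc n k hk hkn, card_poly n (n - k + 1) k (by omega) (by omega)]

end QtN
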